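/- (Voronovskaja-type theorem) Let f ∈ L^∞(ℝ²) be differentiable at (x,y). Assume the kernel φ satisfies the partition of unity (i), M₂(φ) < ∞ with the uniform tail condition (ii), the vanishing first moments m¹_{(1,0)}(φ,u,v) = Σ_{k,j} φ(u−k,v−j)(k−u) = 0 and m¹_{(0,1)}(φ,u,v) = 0 for all (u,v). Assume the sequences satisfy a_k + b_k = α and c_j + d_j = β for constants α, β, with b_k − a_k ≥ l₀ > 0, d_j − c_j ≥ s₀ > 0, and sup_{k,j}{|a_k|,|b_k|,|c_j|,|d_j|} ≤ K. Then lim_{w→∞} w·[K_w^φ f(x,y) − f(x,y)] = (1/2)(α·∂f/∂x(x,y) + β·∂f/∂y(x,y)). -/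

import Mathlib

open Filter MeasureTheory

/-- The bivariate generalized Kantorovich sampling operator. -/
noncomputable def kantorovich (φ : ℝ × ℝ → ℝ) (a b c d : ℤ → ℝ) (f : ℝ × ℝ → ℝ)
    (w x y : ℝ) : ℝ :=
  ∑' kj : ℤ × ℤ,
    (w ^ 2 / ((b kj.1 - a kj.1) * (d kj.2 - c kj.2))) *
      φ (w * x - (kj.1 : ℝ), w * y - (kj.2 : ℝ)) *
      ∫ u in (((kj.1 : ℝ) + a kj.1) / w)..(((kj.1 : ℝ) + b kj.1) / w),
        ∫ v in (((kj.2 : ℝ) + c kj.2) / w)..(((kj.2 : ℝ) + d kj.2) / w), f (u, v)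

/-!
The operator is a sum of cell averages of `f` weighted by the integer translates of `φ`. The average
of an affine function over a rectangle is its value at the centre, and the cell `(k, j)` is centred
at `((k, j) + (α, β) / 2) / w`; so after summation the first-order Taylor polynomial of `f` at
`p = (x, y)` contributes only `f p`, the first algebraic moments of `φ` and `(α, β) / 2`.

For every `ε > 0` there is a `D` such that the Taylor remainder is at most
`ε ‖q - p‖ + D ‖q - p‖ ^ 2` for all `q`, not only near `p`. On the cell `(k, j)` the distance
`‖q - p‖` is at most `(K + ‖(k, j) - w p‖) / w`, so the error multiplied by `w` is at most
`ε + D / w` times absolute moments of `φ` of order zero and two. The moment of order zero is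
controlled by the one of order two and the partition of unity, because every lattice point other
than the nearest one is at distance at least `1 / 2`.
-/

theorem exists_norm_sub_sub_le_mul_norm_add_mul_sq {𝕜 E F : Type*} [NontriviallyNormedField 𝕜]
    [NormedAddCommGroup E] [NormedSpace 𝕜 E] [NormedAddCommGroup F] [NormedSpace 𝕜 F]
    {f : E → F} {f' : E →L[𝕜] F} {p : E} (hf : HasFDerivAt f f' p) (C : ℝ) {ε : ℝ} (hε : 0 < ε) :
    ∃ D, 0 ≤ D ∧ ∀ q, ‖f q‖ ≤ C * (1 + ‖q‖ ^ 2) →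
      ‖f q - f p - f' (q - p)‖ ≤ ε * ‖q - p‖ + D * ‖q - p‖ ^ 2 := by
  obtain ⟨δ, hδ, hnear⟩ := Metric.eventually_nhds_iff.1 ((hasFDerivAt_iff_isLittleO.1 hf).def hε)
  let A := |C| * (1 + 2 * ‖p‖ ^ 2) + ‖f p‖
  refine ⟨2 * |C| + A / δ ^ 2 + ‖f'‖ / δ, by positivity, fun q hq => ?_⟩
  rcases lt_or_ge (dist q p) δ with hqp | hqp
  · exact (hnear hqp).trans (le_add_of_nonneg_right (by positivity))
  rw [dist_eq_norm] at hqp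
  set r := ‖q - p‖
  have hnorm_q : ‖q‖ ^ 2 ≤ 2 * r ^ 2 + 2 * ‖p‖ ^ 2 := by
    have htri : ‖q‖ ≤ r + ‖p‖ := by simpa using norm_add_le (q - p) p
    nlinarith [norm_nonneg q, sq_nonneg (r - ‖p‖)]
  have hfq : ‖f q‖ ≤ |C| * (1 + (2 * r ^ 2 + 2 * ‖p‖ ^ 2)) := by
    refine hq.trans ?_
    gcongr
    exact le_abs_self C
  have hf' : ‖f' (q - p)‖ ≤ ‖f'‖ * r := f'.le_opNorm _
  have hA : A ≤ A / δ ^ 2 * r ^ 2 := by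
    rw [div_mul_eq_mul_div, le_div_iff₀ (by positivity)]
    gcongr
  have hr : ‖f'‖ * r ≤ ‖f'‖ / δ * r ^ 2 := by
    rw [div_mul_eq_mul_div, le_div_iff₀ hδ, mul_assoc, sq]
    gcongr
  calc ‖f q - f p - f' (q - p)‖ ≤ ‖f q‖ + ‖f p‖ + ‖f' (q - p)‖ :=
        (norm_sub_le _ _).trans (by gcongr; exact norm_sub_le _ _)
    _ ≤ 2 * |C| * r ^ 2 + A + ‖f'‖ * r := by linarith
    _ ≤ (2 * |C| + A / δ ^ 2 + ‖f'‖ / δ) * r ^ 2 := by linarith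
    _ ≤ ε * r + (2 * |C| + A / δ ^ 2 + ‖f'‖ / δ) * r ^ 2 :=
        le_add_of_nonneg_left (by positivity)

theorem tendsto_atTop_of_dist_le_add_div_mul {X : Type*} [PseudoMetricSpace X] {F : ℝ → X} {t : X}
    {B : ℝ} (h : ∀ ε > 0, ∃ D, ∀ w > 0, dist (F w) t ≤ (ε + D / w) * B) :
    Tendsto F atTop (nhds t) := by
  rw [Metric.tendsto_nhds]
  intro η hη
  obtain ⟨ε, hε, hεη⟩ := exists_pos_mul_lt hη B
  obtain ⟨D, hD⟩ := h ε hε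
  have hlim : Tendsto (fun w : ℝ => (ε + D / w) * B) atTop (nhds (B * ε)) := by
    simpa [mul_comm] using
      ((tendsto_const_nhds.div_atTop tendsto_id).const_add ε).mul_const B
  filter_upwards [hlim.eventually_lt_const hεη, eventually_gt_atTop 0] with w hlt hw
  exact (hD w hw).trans_lt hlt

theorem norm_tsum_sub_le_tsum_of_norm_sub_le {ι E : Type*} [NormedAddCommGroup E]
    [CompleteSpace E] {f g : ι → E} {e : ι → ℝ} {s : E} (hg : HasSum g s) (he : Summable e)
    (h : ∀ i, ‖f i - g i‖ ≤ e i) : ‖∑' i, f i - s‖ ≤ ∑' i, e i := by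
  have hf : Summable f := by
    simpa using (Summable.of_norm_bounded he h).add hg.summable
  exact (hf.hasSum.sub hg).norm_le_of_bounded he.hasSum h

/-- The sign of `ω i₀` turns the signed sum into a bound for `|ω i₀|`; the other terms are
controlled by the second sum. -/
theorem tsum_abs_le_abs_add_two_mul_div {ι : Type*} {ω ρ : ι → ℝ} {S c : ℝ} {i₀ : ι}
    (hω : HasSum ω S) (hωρ : Summable fun i => |ω i| * ρ i) (hc : 0 < c) (hρ₀ : 0 ≤ ρ i₀)
    (hρ : ∀ i ≠ i₀, c ≤ ρ i) :
    ∑' i, |ω i| ≤ |S| + 2 * (∑' i, |ω i| * ρ i) / c := by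
  let σ : ℝ := (SignType.sign (ω i₀) : SignType)
  have hσ : |σ| ≤ 1 := by
    rcases lt_trichotomy (ω i₀) 0 with h | h | h <;> simp [σ, h]
  have hle : ∀ i, |ω i| ≤ σ * ω i + 2 * (|ω i| * ρ i) / c := by
    intro i
    by_cases hi : i = i₀
    · subst hi
      rw [sign_mul_self]
      exact le_add_of_nonneg_right (by positivity)
    · have hσω : -|ω i| ≤ σ * ω i :=
        (abs_le.1 ((abs_mul _ _).trans_le (mul_le_of_le_one_left (abs_nonneg _) hσ))).1
      have hcρ : |ω i| ≤ |ω i| * ρ i / c := by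
        rw [le_div_iff₀ hc]
        exact mul_le_mul_of_nonneg_left (hρ i hi) (abs_nonneg _)
      linarith [mul_div_assoc 2 (|ω i| * ρ i) c]
  have hσS : σ * S ≤ |S| :=
    (le_abs_self _).trans ((abs_mul _ _).trans_le (mul_le_of_le_one_left (abs_nonneg _) hσ))
  calc ∑' i, |ω i| ≤ σ * S + 2 * (∑' i, |ω i| * ρ i) / c :=
        hasSum_le hle hω.summable.abs.hasSum
          ((hω.mul_left σ).add ((hωρ.hasSum.mul_left 2).div_const c))
    _ ≤ |S| + 2 * (∑' i, |ω i| * ρ i) / c := by gcongr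

theorem one_half_le_abs_intCast_sub_of_ne_round {u : ℝ} {k : ℤ} (h : k ≠ round u) :
    1 / 2 ≤ |(k : ℝ) - u| := by
  have hone : (1 : ℝ) ≤ |(k : ℝ) - round u| := by
    exact_mod_cast Int.one_le_abs (sub_ne_zero.2 h)
  linarith [abs_sub_le (k : ℝ) u (round u), abs_sub_round u]

theorem one_fourth_le_sq_add_sq_of_ne_round {u v : ℝ} {kj : ℤ × ℤ} (h : kj ≠ (round u, round v)) :
    1 / 4 ≤ ((kj.1 : ℝ) - u) ^ 2 + ((kj.2 : ℝ) - v) ^ 2 := by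
  have hsq : ∀ {z : ℝ} {n : ℤ}, n ≠ round z → 1 / 4 ≤ ((n : ℝ) - z) ^ 2 := fun hn => by
    rw [← sq_abs]
    nlinarith [one_half_le_abs_intCast_sub_of_ne_round hn]
  rcases not_and_or.1 (mt Prod.ext_iff.2 h) with h₁ | h₂
  · linarith [hsq h₁, sq_nonneg ((kj.2 : ℝ) - v)]
  · linarith [hsq h₂, sq_nonneg ((kj.1 : ℝ) - u)]

theorem integrableOn_Ioc_prod_Ioc {E : Type*} [NormedAddCommGroup E] {f : ℝ × ℝ → E}
    (hf : LocallyIntegrable f) (a b c d : ℝ) :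
    IntegrableOn f (Set.Ioc a b ×ˢ Set.Ioc c d) :=
  (hf.integrableOn_isCompact (isCompact_Icc.prod isCompact_Icc)).mono_set
    (Set.prod_mono Set.Ioc_subset_Icc_self Set.Ioc_subset_Icc_self)

section Average

variable {E : Type*} [NormedAddCommGroup E] [NormedSpace ℝ E]

theorem setAverage_sub_of_integrableOn {X : Type*} [MeasurableSpace X] {μ : Measure X} {s : Set X}
    {f g : X → E} (hf : IntegrableOn f s μ) (hg : IntegrableOn g s μ) :
    ⨍ z in s, (f z - g z) ∂μ = ⨍ z in s, f z ∂μ - ⨍ z in s, g z ∂μ := by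
  simp only [setAverage_eq, integral_sub hf hg, smul_sub]

theorem norm_setAverage_sub_le [CompleteSpace E] {X : Type*} [MeasurableSpace X] {μ : Measure X}
    {s : Set X} {f g : X → E} {B : ℝ} (hs₀ : μ s ≠ 0) (hs : μ s ≠ ⊤) (hf : IntegrableOn f s μ)
    (hg : IntegrableOn g s μ) (h : ∀ᵐ z ∂μ.restrict s, ‖f z - g z‖ ≤ B) :
    ‖⨍ z in s, f z ∂μ - ⨍ z in s, g z ∂μ‖ ≤ B := by
  rw [← setAverage_sub_of_integrableOn hf hg, ← mem_closedBall_zero_iff]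
  exact (convex_closedBall 0 B).set_average_mem Metric.isClosed_closedBall hs₀ hs
    (h.mono fun _ hz => mem_closedBall_zero_iff.2 hz) (hf.sub hg)

theorem intervalIntegral_const_add_smul [CompleteSpace E] (a b : ℝ) (e e' : E) :
    ∫ t in a..b, (e + t • e') = (b - a) • (e + ((a + b) / 2) • e') := by
  rw [intervalIntegral.integral_add (by simp) ((by fun_prop : Continuous _).intervalIntegrable _ _),
    intervalIntegral.integral_const, intervalIntegral.integral_smul_const, integral_id]
  module

theorem continuousLinearMap_real_prod_apply (L : ℝ × ℝ →L[ℝ] E) (z : ℝ × ℝ) :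
    L z = z.1 • L (1, 0) + z.2 • L (0, 1) := by
  simp [← map_smul, ← map_add]

theorem setAverage_Ioc_prod_Ioc_eq_smul_integral {a b c d : ℝ} (hab : a < b) (hcd : c < d)
    {f : ℝ × ℝ → E} (hf : LocallyIntegrable f) :
    ⨍ z in Set.Ioc a b ×ˢ Set.Ioc c d, f z =
      ((b - a) * (d - c))⁻¹ • ∫ u in a..b, ∫ v in c..d, f (u, v) := by
  have hint := integrableOn_Ioc_prod_Ioc hf a b c d
  rw [Measure.volume_eq_prod] at hint ⊢
  rw [setAverage_eq, setIntegral_prod _ hint, measureReal_prod_prod,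
    Real.volume_real_Ioc_of_le hab.le, Real.volume_real_Ioc_of_le hcd.le]
  simp only [intervalIntegral.integral_of_le hab.le, intervalIntegral.integral_of_le hcd.le]

theorem setAverage_Ioc_prod_Ioc_continuousLinearMap [CompleteSpace E] {a b c d : ℝ} (hab : a < b)
    (hcd : c < d) (L : ℝ × ℝ →L[ℝ] E) :
    ⨍ z in Set.Ioc a b ×ˢ Set.Ioc c d, L z = L ((a + b) / 2, (c + d) / 2) := by
  have hinner : ∀ s, ∫ t in c..d, L (s, t) =
      (d - c) • ((c + d) / 2) • L (0, 1) + s • (d - c) • L (1, 0) := fun s => by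
    simp only [continuousLinearMap_real_prod_apply L (s, _), intervalIntegral_const_add_smul]
    module
  rw [setAverage_Ioc_prod_Ioc_eq_smul_integral hab hcd L.continuous.locallyIntegrable,
    inv_smul_eq_iff₀ (mul_ne_zero (sub_ne_zero.2 hab.ne') (sub_ne_zero.2 hcd.ne'))]
  simp only [hinner, intervalIntegral_const_add_smul,
    continuousLinearMap_real_prod_apply L ((a + b) / 2, _)]
  module

theorem norm_setAverage_Ioc_prod_Ioc_sub_affine_le [CompleteSpace E] {f : ℝ × ℝ → E}
    {a b c d B : ℝ} (hab : a < b) (hcd : c < d) (hf : LocallyIntegrable f) {e : E} {p : ℝ × ℝ}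
    {L : ℝ × ℝ →L[ℝ] E}
    (h : ∀ᵐ z ∂volume.restrict (Set.Ioc a b ×ˢ Set.Ioc c d), ‖f z - e - L (z - p)‖ ≤ B) :
    ‖(⨍ z in Set.Ioc a b ×ˢ Set.Ioc c d, f z) - (e + L (((a + b) / 2, (c + d) / 2) - p))‖ ≤ B := by
  set s := Set.Ioc a b ×ˢ Set.Ioc c d
  have hs₀ : volume s ≠ 0 := by
    simp [s, Measure.volume_eq_prod, Measure.prod_prod, hab, hcd]
  have hs : volume s ≠ ⊤ := by
    simp [s, Measure.volume_eq_prod, Measure.prod_prod, ENNReal.mul_eq_top]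
  have hLs : IntegrableOn L s := integrableOn_Ioc_prod_Ioc L.continuous.locallyIntegrable a b c d
  have hes : IntegrableOn (fun _ => L p - e) s :=
    integrableOn_Ioc_prod_Ioc (locallyIntegrable_const _) a b c d
  have haffine : ⨍ z in s, (L z - (L p - e)) = e + L (((a + b) / 2, (c + d) / 2) - p) := by
    rw [setAverage_sub_of_integrableOn hLs hes, setAverage_const hs₀ hs,
      setAverage_Ioc_prod_Ioc_continuousLinearMap hab hcd, map_sub]
    abel
  rw [← haffine]
  refine norm_setAverage_sub_le hs₀ hs (integrableOn_Ioc_prod_Ioc hf a b c d) (hLs.sub hes)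
    (h.mono fun z hz => ?_)
  rwa [map_sub, show f z - e - (L z - L p) = f z - (L z - (L p - e)) by abel] at hz

end Average

/-- The kernels of the theorem: the integer translates of `φ` form a partition of unity, their first
algebraic moments are constantly `m`, and their second absolute moments are at most `M`. -/
structure IsSamplingKernel (φ : ℝ × ℝ → ℝ) (m : ℝ × ℝ) (M : ℝ) : Prop where
  hasSum_one : ∀ u v : ℝ, HasSum (fun kj : ℤ × ℤ => φ (u - kj.1, v - kj.2)) 1
  hasSum_fst : ∀ u v : ℝ, HasSum (fun kj : ℤ × ℤ => φ (u - kj.1, v - kj.2) * (kj.1 - u)) m.1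
  hasSum_snd : ∀ u v : ℝ, HasSum (fun kj : ℤ × ℤ => φ (u - kj.1, v - kj.2) * (kj.2 - v)) m.2
  summable_sq : ∀ u v : ℝ, Summable fun kj : ℤ × ℤ =>
    |φ (u - kj.1, v - kj.2)| * ((kj.1 - u) ^ 2 + (kj.2 - v) ^ 2)
  tsum_sq_le : ∀ u v : ℝ, ∑' kj : ℤ × ℤ,
    |φ (u - kj.1, v - kj.2)| * ((kj.1 - u) ^ 2 + (kj.2 - v) ^ 2) ≤ M

namespace IsSamplingKernel

variable {φ : ℝ × ℝ → ℝ} {m : ℝ × ℝ} {M : ℝ}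

theorem tsum_abs_le (hφ : IsSamplingKernel φ m M) (u v : ℝ) :
    ∑' kj : ℤ × ℤ, |φ (u - kj.1, v - kj.2)| ≤ 1 + 8 * M := by
  have h := tsum_abs_le_abs_add_two_mul_div (i₀ := (round u, round v)) (hφ.hasSum_one u v)
    (hφ.summable_sq u v) (by norm_num : (0 : ℝ) < 1 / 4) (by positivity)
    fun _ => one_fourth_le_sq_add_sq_of_ne_round
  rw [abs_one] at h
  linarith [hφ.tsum_sq_le u v]

theorem hasSum_mul_affine (hφ : IsSamplingKernel φ m M) (u v e : ℝ) (L : ℝ × ℝ →L[ℝ] ℝ)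
    (τ : ℝ × ℝ) :
    HasSum (fun kj : ℤ × ℤ => φ (u - kj.1, v - kj.2) * (e + L ((kj.1 - u, kj.2 - v) + τ)))
      (e + L (m + τ)) := by
  have hL : ∀ z : ℝ × ℝ, e + L (z + τ) = e + L τ + z.1 * L (1, 0) + z.2 * L (0, 1) := fun z => by
    rw [map_add, continuousLinearMap_real_prod_apply L z, smul_eq_mul, smul_eq_mul]
    ring
  simpa only [hL, mul_add, ← mul_assoc, one_mul] using
    (((hφ.hasSum_one u v).mul_right (e + L τ)).add
      ((hφ.hasSum_fst u v).mul_right (L (1, 0)))).add ((hφ.hasSum_snd u v).mul_right (L (0, 1)))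

end IsSamplingKernel

/-- The two node sequences along one axis: the `k`-th cell of the operator is
`((k + a k) / w, (k + b k) / w]`, so that `α / 2` is the displacement of its centre. -/
structure IsCellFamily (a b : ℤ → ℝ) (α K : ℝ) : Prop where
  lt : ∀ k, a k < b k
  add_eq : ∀ k, a k + b k = α
  abs_left_le : ∀ k, |a k| ≤ K
  abs_right_le : ∀ k, |b k| ≤ K

/-- The rectangle over which the `(k, j)`-th term of the Kantorovich operator averages. It is taken
half-open to agree with the convention for interval integrals. -/
def kantorovichCell (a b c d : ℤ → ℝ) (w : ℝ) (kj : ℤ × ℤ) : Set (ℝ × ℝ) :=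
  Set.Ioc ((kj.1 + a kj.1) / w) ((kj.1 + b kj.1) / w) ×ˢ
    Set.Ioc ((kj.2 + c kj.2) / w) ((kj.2 + d kj.2) / w)

theorem add_div_lt_add_div_of_lt {κ a b w : ℝ} (hab : a < b) (hw : 0 < w) :
    (κ + a) / w < (κ + b) / w := by
  gcongr

theorem kantorovich_eq_tsum_setAverage {a b c d : ℤ → ℝ} {w : ℝ} (hab : ∀ k, a k < b k)
    (hcd : ∀ j, c j < d j) (hw : 0 < w) {f : ℝ × ℝ → ℝ} (hf : LocallyIntegrable f)
    (φ : ℝ × ℝ → ℝ) (x y : ℝ) :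
    kantorovich φ a b c d f w x y = ∑' kj : ℤ × ℤ,
      φ (w * x - kj.1, w * y - kj.2) * ⨍ z in kantorovichCell a b c d w kj, f z := by
  refine tsum_congr fun kj => ?_
  have hba := sub_ne_zero.2 (hab kj.1).ne'
  have hdc := sub_ne_zero.2 (hcd kj.2).ne'
  rw [kantorovichCell, setAverage_Ioc_prod_Ioc_eq_smul_integral
    (add_div_lt_add_div_of_lt (hab kj.1) hw) (add_div_lt_add_div_of_lt (hcd kj.2) hw) hf,
    smul_eq_mul, ← sub_div, ← sub_div, add_sub_add_left_eq_sub, add_sub_add_left_eq_sub]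
  field_simp

namespace IsCellFamily

variable {a b c d : ℤ → ℝ} {α β K w : ℝ}

theorem abs_sub_le_of_mem_Ioc (h : IsCellFamily a b α K) (hw : 0 < w) {k : ℤ} {u : ℝ}
    (hu : u ∈ Set.Ioc ((k + a k) / w) ((k + b k) / w)) (x : ℝ) :
    |u - x| ≤ (K + |k - w * x|) / w := by
  have hlow := (div_lt_iff₀ hw).1 hu.1
  have hupp := (le_div_iff₀ hw).1 hu.2
  rw [abs_le, ← neg_div, div_le_iff₀ hw, le_div_iff₀ hw]
  constructor <;> linarith [neg_abs_le (a k), h.abs_left_le k, le_abs_self (b k),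
    h.abs_right_le k, neg_abs_le (k - w * x), le_abs_self (k - w * x)]

theorem norm_sub_le_of_mem_kantorovichCell (hab : IsCellFamily a b α K)
    (hcd : IsCellFamily c d β K) (hw : 0 < w) {kj : ℤ × ℤ} {z : ℝ × ℝ}
    (hz : z ∈ kantorovichCell a b c d w kj) (p : ℝ × ℝ) :
    ‖z - p‖ ≤ (K + √((kj.1 - w * p.1) ^ 2 + (kj.2 - w * p.2) ^ 2)) / w := by
  refine max_le ((hab.abs_sub_le_of_mem_Ioc hw hz.1 p.1).trans ?_)
    ((hcd.abs_sub_le_of_mem_Ioc hw hz.2 p.2).trans ?_) <;> gcongr <;> apply Real.abs_le_sqrt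
  · exact le_add_of_nonneg_right (sq_nonneg _)
  · exact le_add_of_nonneg_left (sq_nonneg _)

theorem center_sub_eq (hab : IsCellFamily a b α K) (hcd : IsCellFamily c d β K) (hw : w ≠ 0)
    (k j : ℤ) (p : ℝ × ℝ) :
    ((((k + a k) / w + (k + b k) / w) / 2, ((j + c j) / w + (j + d j) / w) / 2) - p : ℝ × ℝ) =
      w⁻¹ • ((k - w * p.1, j - w * p.2) + (α / 2, β / 2)) := by
  rw [← hab.add_eq k, ← hcd.add_eq j]
  ext <;> simp <;> field

theorem norm_setAverage_kantorovichCell_sub_le {E : Type*} [NormedAddCommGroup E] [NormedSpace ℝ E]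
    [CompleteSpace E] (hab : IsCellFamily a b α K) (hcd : IsCellFamily c d β K) (hw : 0 < w)
    {f : ℝ × ℝ → E} (hf : LocallyIntegrable f) {p : ℝ × ℝ} {L : ℝ × ℝ →L[ℝ] E} {ε D : ℝ}
    (hε : 0 ≤ ε) (hD : 0 ≤ D)
    (hfL : ∀ᵐ q, ‖f q - f p - L (q - p)‖ ≤ ε * ‖q - p‖ + D * ‖q - p‖ ^ 2) (kj : ℤ × ℤ) :
    ‖(⨍ z in kantorovichCell a b c d w kj, f z) -
        (f p + (w⁻¹ • L) ((kj.1 - w * p.1, kj.2 - w * p.2) + (α / 2, β / 2)))‖ ≤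
      w⁻¹ * (ε + D / w) *
        (1 + 2 * K ^ 2 + 2 * ((kj.1 - w * p.1) ^ 2 + (kj.2 - w * p.2) ^ 2)) := by
  set ρ := ((kj.1 : ℝ) - w * p.1) ^ 2 + ((kj.2 : ℝ) - w * p.2) ^ 2
  set N := K + √ρ
  have hcell : ∀ᵐ z ∂volume.restrict (kantorovichCell a b c d w kj),
      ‖f z - f p - L (z - p)‖ ≤ ε * (N / w) + D * (N / w) ^ 2 := by
    filter_upwards [ae_restrict_of_ae hfL,
      ae_restrict_mem (measurableSet_Ioc.prod measurableSet_Ioc)] with z hz hmem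
    have hzp : ‖z - p‖ ≤ N / w := hab.norm_sub_le_of_mem_kantorovichCell hcd hw hmem p
    exact hz.trans (by gcongr)
  have haverage := norm_setAverage_Ioc_prod_Ioc_sub_affine_le
    (add_div_lt_add_div_of_lt (hab.lt kj.1) hw) (add_div_lt_add_div_of_lt (hcd.lt kj.2) hw) hf hcell
  rw [hab.center_sub_eq hcd hw.ne', map_smul, ← smul_apply] at haverage
  have hN_sq : N ^ 2 ≤ 2 * K ^ 2 + 2 * ρ := by
    have hρ : √ρ ^ 2 = ρ := Real.sq_sqrt (by positivity)
    linarith [add_sq_le (a := K) (b := √ρ)]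
  have hN : N ≤ 1 + N ^ 2 := by nlinarith [sq_nonneg (N - 1)]
  calc _ ≤ ε * (N / w) + D * (N / w) ^ 2 := haverage
    _ = w⁻¹ * (ε * N + D / w * N ^ 2) := by field
    _ ≤ w⁻¹ * (ε * (1 + 2 * K ^ 2 + 2 * ρ) + D / w * (1 + 2 * K ^ 2 + 2 * ρ)) := by
      gcongr <;> linarith
    _ = w⁻¹ * (ε + D / w) * (1 + 2 * K ^ 2 + 2 * ρ) := by ring

end IsCellFamily

theorem abs_mul_kantorovich_sub_sub_le {φ f : ℝ × ℝ → ℝ} {a b c d : ℤ → ℝ} {m p : ℝ × ℝ}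
    {α β K M w ε D : ℝ} {L : ℝ × ℝ →L[ℝ] ℝ} (hφ : IsSamplingKernel φ m M)
    (hab : IsCellFamily a b α K) (hcd : IsCellFamily c d β K) (hf : LocallyIntegrable f)
    (hε : 0 ≤ ε) (hD : 0 ≤ D)
    (hfL : ∀ᵐ q, ‖f q - f p - L (q - p)‖ ≤ ε * ‖q - p‖ + D * ‖q - p‖ ^ 2) (hw : 0 < w) :
    |w * (kantorovich φ a b c d f w p.1 p.2 - f p) - L (m + (α / 2, β / 2))| ≤
      (ε + D / w) * ((1 + 2 * K ^ 2) * (1 + 8 * M) + 2 * M) := by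
  have hlinear := hφ.hasSum_mul_affine (w * p.1) (w * p.2) (f p) (w⁻¹ • L) (α / 2, β / 2)
  have hmoment := (((hφ.hasSum_one (w * p.1) (w * p.2)).summable.abs.hasSum.mul_left
    (1 + 2 * K ^ 2)).add ((hφ.summable_sq (w * p.1) (w * p.2)).hasSum.mul_left 2)).mul_left
      (w⁻¹ * (ε + D / w))
  have herror := norm_tsum_sub_le_tsum_of_norm_sub_le hlinear hmoment.summable fun kj => by
    rw [← mul_sub, norm_mul, Real.norm_eq_abs]
    have hcell := hab.norm_setAverage_kantorovichCell_sub_le hcd hw hf hε hD hfL kj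
    exact (mul_le_mul_of_nonneg_left hcell (abs_nonneg _)).trans_eq (by ring)
  rw [hmoment.tsum_eq, ← kantorovich_eq_tsum_setAverage hab.lt hcd.lt hw hf] at herror
  set Kf := kantorovich φ a b c d f w p.1 p.2
  set S₀ := ∑' kj : ℤ × ℤ, |φ (w * p.1 - kj.1, w * p.2 - kj.2)|
  set S₂ := ∑' kj : ℤ × ℤ, |φ (w * p.1 - kj.1, w * p.2 - kj.2)| *
    ((kj.1 - w * p.1) ^ 2 + (kj.2 - w * p.2) ^ 2)
  have hscale : w * (Kf - f p) - L (m + (α / 2, β / 2)) =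
      w * (Kf - (f p + (w⁻¹ • L) (m + (α / 2, β / 2)))) := by
    rw [smul_apply, smul_eq_mul]
    field
  rw [hscale, abs_mul, abs_of_pos hw]
  calc w * |Kf - (f p + (w⁻¹ • L) (m + (α / 2, β / 2)))|
      ≤ w * (w⁻¹ * (ε + D / w) * ((1 + 2 * K ^ 2) * S₀ + 2 * S₂)) :=
        mul_le_mul_of_nonneg_left herror hw.le
    _ = (ε + D / w) * ((1 + 2 * K ^ 2) * S₀ + 2 * S₂) := by field
    _ ≤ (ε + D / w) * ((1 + 2 * K ^ 2) * (1 + 8 * M) + 2 * M) := by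
        gcongr
        · exact hφ.tsum_abs_le _ _
        · exact hφ.tsum_sq_le _ _

theorem kantorovich_voronovskaja_general {φ f : ℝ × ℝ → ℝ} {a b c d : ℤ → ℝ} {m p : ℝ × ℝ}
    {α β K M C : ℝ} {L : ℝ × ℝ →L[ℝ] ℝ} (hφ : IsSamplingKernel φ m M)
    (hab : IsCellFamily a b α K) (hcd : IsCellFamily c d β K) (hfm : AEStronglyMeasurable f)
    (hfb : ∀ᵐ q, |f q| ≤ C * (1 + ‖q‖ ^ 2)) (hdf : HasFDerivAt f L p) :
    Tendsto (fun w => w * (kantorovich φ a b c d f w p.1 p.2 - f p)) atTop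
      (nhds (L (m + (α / 2, β / 2)))) := by
  have hf : LocallyIntegrable f := by
    have hbound : Continuous fun q : ℝ × ℝ => C * (1 + ‖q‖ ^ 2) := by fun_prop
    exact hbound.locallyIntegrable.mono hfm (hfb.mono fun q hq => hq.trans (le_abs_self _))
  refine tendsto_atTop_of_dist_le_add_div_mul (B := (1 + 2 * K ^ 2) * (1 + 8 * M) + 2 * M)
    fun ε hε => ?_
  obtain ⟨D, hD, hTaylor⟩ := exists_norm_sub_sub_le_mul_norm_add_mul_sq hdf C hε
  exact ⟨D, fun w hw =>
    abs_mul_kantorovich_sub_sub_le hφ hab hcd hf hε.le hD (hfb.mono hTaylor) hw⟩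

/-- Voronovskaja type theorem for the bivariate Kantorovich
sampling operators. -/
theorem kantorovich_voronovskaja
    (φ f : ℝ × ℝ → ℝ) (a b c d : ℤ → ℝ) (x y : ℝ)
    (L : ℝ × ℝ →L[ℝ] ℝ)
    (hφc : Continuous φ) (hφb : ∃ C, ∀ p, |φ p| ≤ C)
    -- (i) partition of unity
    (hpu : ∀ u v : ℝ, HasSum (fun kj : ℤ × ℤ => φ (u - (kj.1 : ℝ), v - (kj.2 : ℝ))) 1)
    -- (ii) finiteness of the second absolute moment M₂(φ)
    (hM2 : ∃ M, ∀ u v : ℝ,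
      Summable (fun kj : ℤ × ℤ => |φ (u - (kj.1 : ℝ), v - (kj.2 : ℝ))| *
        (((kj.1 : ℝ) - u) ^ 2 + ((kj.2 : ℝ) - v) ^ 2)) ∧
      (∑' kj : ℤ × ℤ, |φ (u - (kj.1 : ℝ), v - (kj.2 : ℝ))| *
        (((kj.1 : ℝ) - u) ^ 2 + ((kj.2 : ℝ) - v) ^ 2)) ≤ M)
    -- (ii) uniform vanishing of tails
    (htail : ∀ ε > (0 : ℝ), ∃ R > (0 : ℝ), ∀ u v : ℝ,
      (∑' kj : {p : ℤ × ℤ // ((p.1 : ℝ) - u) ^ 2 + ((p.2 : ℝ) - v) ^ 2 > R ^ 2},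
        |φ (u - ((kj : ℤ × ℤ).1 : ℝ), v - ((kj : ℤ × ℤ).2 : ℝ))| *
          (((kj.val.1 : ℝ) - u) ^ 2 + ((kj.val.2 : ℝ) - v) ^ 2)) < ε)
    -- (iii) vanishing first algebraic moments
    (hm10 : ∀ u v : ℝ,
      HasSum (fun kj : ℤ × ℤ => φ (u - (kj.1 : ℝ), v - (kj.2 : ℝ)) * ((kj.1 : ℝ) - u)) 0)
    (hm01 : ∀ u v : ℝ,
      HasSum (fun kj : ℤ × ℤ => φ (u - (kj.1 : ℝ), v - (kj.2 : ℝ)) * ((kj.2 : ℝ) - v)) 0)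
    -- node sequences
    (α β l₀ s₀ K : ℝ) (hl₀ : 0 < l₀) (hs₀ : 0 < s₀)
    (hα : ∀ k, a k + b k = α) (hβ : ∀ j, c j + d j = β)
    (hlb : ∀ k, l₀ ≤ b k - a k) (hsb : ∀ j, s₀ ≤ d j - c j)
    (hK : ∀ k : ℤ, |a k| ≤ K ∧ |b k| ≤ K ∧ |c k| ≤ K ∧ |d k| ≤ K)
    -- f ∈ L^∞(ℝ²), differentiable at (x, y) with derivative L
    (hfm : Measurable f) (hfb : ∃ C, ∀ p, |f p| ≤ C)
    (hdf : HasFDerivAt f L (x, y)) :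
    Tendsto (fun w => w * (kantorovich φ a b c d f w x y - f (x, y))) atTop
      (nhds ((1 / 2) * (α * L (1, 0) + β * L (0, 1)))) := by
  obtain ⟨M, hM⟩ := hM2
  obtain ⟨C, hC⟩ := hfb
  have hφ : IsSamplingKernel φ 0 M :=
    ⟨hpu, hm10, hm01, fun u v => (hM u v).1, fun u v => (hM u v).2⟩
  have hab : IsCellFamily a b α K :=
    ⟨fun k => sub_pos.1 (hl₀.trans_le (hlb k)), hα, fun k => (hK k).1, fun k => (hK k).2.1⟩
  have hcd : IsCellFamily c d β K :=
    ⟨fun j => sub_pos.1 (hs₀.trans_le (hsb j)), hβ, fun j => (hK j).2.2.1, fun j => (hK j).2.2.2⟩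
  have hgrowth : ∀ q, |f q| ≤ C * (1 + ‖q‖ ^ 2) := fun q =>
    (hC q).trans (le_mul_of_one_le_right ((abs_nonneg _).trans (hC q))
      (le_add_of_nonneg_right (sq_nonneg _)))
  convert kantorovich_voronovskaja_general hφ hab hcd hfm.aestronglyMeasurable
    (ae_of_all _ hgrowth) hdf using 2
  rw [zero_add, continuousLinearMap_real_prod_apply L (α / 2, β / 2), smul_eq_mul, smul_eq_mul]
  ring
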